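/- arXiv:math/9903186 — 2 statements merged into one kernel-verified Lean document; each statement's English description precedes it below -/
import Mathlib

section
/- Let M : ℂ₊ → B(H) be a Herglotz operator and suppose M(z₀)⁻¹ ∈ B(H) for some z₀ ∈ ℂ₊ (and hence, M(z)⁻¹ ∈ B(H) for all z ∈ ℂ₊). Then the map z ↦ log(M(z)) is again a Herglotz operator on ℂ₊, and moreover 0 ≤ Im(log(M(z))) ≤ π I_H for all z ∈ ℂ₊. -/
open Complex Filter MeasureTheory TopologicalSpace ContinuousLinearMap
open scoped InnerProductSpace Topology

noncomputable section

namespace SpectralShift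

variable {H : Type*} [NormedAddCommGroup H] [InnerProductSpace ℂ H] [CompleteSpace H]

/-- The imaginary part `(T - T*)/(2i)` of a bounded operator. -/
def imPart (T : H →L[ℂ] H) : H →L[ℂ] H :=
  ((2 * Complex.I)⁻¹ : ℂ) • (T - ContinuousLinearMap.adjoint T)

/-- An operator-valued Herglotz function: analytic on the open upper half-plane with
nonnegative imaginary part there. -/
def IsHerglotz (M : ℂ → H →L[ℂ] H) : Prop :=
  DifferentiableOn ℂ M {z : ℂ | 0 < z.im} ∧ ∀ z : ℂ, 0 < z.im → (imPart (M z)).IsPositive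

/-- The integrand `(T + iλ)⁻¹ - (1 + iλ)⁻¹ I` in the integral representation of `log T`. -/
def logIntegrand (T : H →L[ℂ] H) (t : ℝ) : H →L[ℂ] H :=
  Ring.inverse (T + ((t : ℂ) * Complex.I) • (1 : H →L[ℂ] H)) -
    (((1 : ℂ) + (t : ℂ) * Complex.I)⁻¹) • (1 : H →L[ℂ] H)

/-- `log T = -i ∫₀^∞ ((T + iλ)⁻¹ - (1 + iλ)⁻¹ I) dλ` as a norm-convergent improper
Riemann integral, for a dissipative boundedly invertible `T`. -/
def opLog (T : H →L[ℂ] H) : H →L[ℂ] H :=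
  limUnder atTop (fun R : ℝ => (-Complex.I) • ∫ t in (0:ℝ)..R, logIntegrand T t)

/-- The logarithm `log S = (log S*)*` of an operator `S` with `-S` dissipative. -/
def opLogAnti (T : H →L[ℂ] H) : H →L[ℂ] H :=
  ContinuousLinearMap.adjoint (opLog (ContinuousLinearMap.adjoint T))

/-- The logarithm of a Herglotz-type operator family on `ℂ ∖ ℝ`, using `log T` in the
upper half-plane and the convention `log S = (log S*)*` in the lower half-plane. -/
def logHerg (Φ : ℂ → H →L[ℂ] H) (z : ℂ) : H →L[ℂ] H :=
  if 0 < z.im then opLog (Φ z) else opLogAnti (Φ z)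

/-- The logarithm of an anti-Herglotz-type operator family on `ℂ ∖ ℝ` (nonpositive
imaginary part in the upper half-plane). -/
def logAntiHerg (Φ : ℂ → H →L[ℂ] H) (z : ℂ) : H →L[ℂ] H :=
  if 0 < z.im then opLogAnti (Φ z) else opLog (Φ z)

/-- Trace class: absolute summability of the diagonal in every Hilbert basis. -/
def IsTraceClass (T : H →L[ℂ] H) : Prop :=
  ∀ (w : Set H) (b : HilbertBasis w ℂ H), Summable fun i => ‖⟪(b i : H), T (b i)⟫_ℂ‖

/-- The trace, computed in a fixed Hilbert basis (basis-independent for trace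
class operators). -/
def trH (T : H →L[ℂ] H) : ℂ :=
  ∑' i, ⟪((exists_hilbertBasis ℂ H).choose_spec.choose i : H),
    T ((exists_hilbertBasis ℂ H).choose_spec.choose i)⟫_ℂ

/-- The trace norm, via duality with bounded operators (the correct value for trace
class operators). -/
def traceNorm (T : H →L[ℂ] H) : ℝ :=
  ⨆ B : {B : H →L[ℂ] H // ‖B‖ ≤ 1}, ‖trH (T * (B : H →L[ℂ] H))‖

/-- Hilbert-Schmidt operators. -/
def IsHilbertSchmidt (K : H →L[ℂ] H) : Prop :=
  ∀ (w : Set H) (b : HilbertBasis w ℂ H), Summable fun i => ‖K (b i)‖ ^ 2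

/-- A (possibly unbounded) self-adjoint operator in `H`: a densely defined symmetric
operator possessing everywhere-defined bounded resolvents at every non-real point. -/
structure SelfAdjointOp (H : Type*) [NormedAddCommGroup H] [InnerProductSpace ℂ H]
    [CompleteSpace H] where
  dom : Submodule ℂ H
  dense_dom : Dense (dom : Set H)
  op : dom →ₗ[ℂ] H
  symmetric : ∀ x y : dom, ⟪op x, (y : H)⟫_ℂ = ⟪(x : H), op y⟫_ℂ
  resolvent : ℂ → H →L[ℂ] H
  resolvent_mem : ∀ {z : ℂ}, z.im ≠ 0 → ∀ x : H, resolvent z x ∈ dom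
  op_resolvent : ∀ {z : ℂ} (hz : z.im ≠ 0) (x : H),
    op ⟨resolvent z x, resolvent_mem hz x⟩ - z • resolvent z x = x
  resolvent_op : ∀ {z : ℂ} (hz : z.im ≠ 0) (x : dom),
    resolvent z (op x - z • (x : H)) = x

/-- `B = A + V` for a bounded operator `V` (with `dom B = dom A`). -/
def IsSumOf (B A : SelfAdjointOp H) (V : H →L[ℂ] H) : Prop :=
  B.dom = A.dom ∧ ∀ (x : H) (hxB : x ∈ B.dom) (hxA : x ∈ A.dom),
    B.op ⟨x, hxB⟩ = A.op ⟨x, hxA⟩ + V x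

/-- `R` is the (bounded, everywhere defined) resolvent `(A - z)⁻¹` of `A` at `z`. -/
def SelfAdjointOp.IsResolventAt (A : SelfAdjointOp H) (z : ℂ) (R : H →L[ℂ] H) : Prop :=
  (∀ x : H, R x ∈ A.dom) ∧
  (∀ (x : H) (hx : R x ∈ A.dom), A.op ⟨R x, hx⟩ - z • R x = x) ∧
  (∀ x : A.dom, R (A.op x - z • (x : H)) = x)

/-- `E` is the projection-valued spectral measure of the self-adjoint operator `A`. -/
def IsSpectralMeasure (A : SelfAdjointOp H) (E : Set ℝ → H →L[ℂ] H) : Prop :=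
  (∀ B : Set ℝ, MeasurableSet B → IsSelfAdjoint (E B)) ∧
  (∀ B C : Set ℝ, MeasurableSet B → MeasurableSet C → E B * E C = E (B ∩ C)) ∧
  (E Set.univ = 1) ∧
  (∀ (f : ℕ → Set ℝ), (∀ n, MeasurableSet (f n)) → Pairwise (Function.onFun Disjoint f) →
    ∀ x : H, HasSum (fun n => E (f n) x) (E (⋃ n, f n) x)) ∧
  ∃ μ : H → Measure ℝ,
    (∀ (f : H) (B : Set ℝ), MeasurableSet B → μ f B = ENNReal.ofReal (⟪f, E B f⟫_ℂ).re) ∧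
    ∀ (z : ℂ), z.im ≠ 0 → ∀ f : H,
      ⟪f, A.resolvent z f⟫_ℂ = ∫ l : ℝ, ((l : ℂ) - z)⁻¹ ∂(μ f)

/-- Invertibility of `T` restricted to the range of the orthogonal projection `P`
(for `T` commuting with `P`), with inverse `S` supported in `ran P`. -/
def InvertibleOn (T P : H →L[ℂ] H) : Prop :=
  ∃ S : H →L[ℂ] H, S * P = S ∧ P * S = S ∧ S * (T * P) = P ∧ (P * T) * S = P

/-- The spectral projection `J₊ = (I + J)/2` onto `H₊` for a self-adjoint unitary `J`. -/
def Jplus (J : H →L[ℂ] H) : H →L[ℂ] H := ((2 : ℂ)⁻¹) • (1 + J)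

/-- The spectral projection `J₋ = (I - J)/2` onto `H₋` for a self-adjoint unitary `J`. -/
def Jminus (J : H →L[ℂ] H) : H →L[ℂ] H := ((2 : ℂ)⁻¹) • (1 - J)

/-- `Φ₊(z) = I + J₊ K* (H₀ - z)⁻¹ K J₊`, the operator on `H` inducing `Φ₊(z)` on `H₊`
(and the identity on `H₋`). -/
def PhiPlus (H0 : SelfAdjointOp H) (J K : H →L[ℂ] H) (z : ℂ) : H →L[ℂ] H :=
  1 + Jplus J * (ContinuousLinearMap.adjoint K * H0.resolvent z * K) * Jplus J

/-- `Φ̃₋(z) = I - J₋ K* (H₊ - z)⁻¹ K J₋`, the operator on `H` inducing `Φ̃₋(z)` on `H₋`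
(and the identity on `H₊`). -/
def PhiMinusT (Hp : SelfAdjointOp H) (J K : H →L[ℂ] H) (z : ℂ) : H →L[ℂ] H :=
  1 - Jminus J * (ContinuousLinearMap.adjoint K * Hp.resolvent z * K) * Jminus J

/-!
Invertibility propagates: for dissipative `T` the quadratic form of `T (T + i)⁻¹` has nonnegative
real part and dominates the square of its norm, so for `T = M z` Harnack's inequality carries
coercivity from one point of a ball to all others.

A dissipative invertible `T` satisfies `‖(T + it)⁻¹‖ ≤ C / |1 + it|` for `t ≥ 0`, and this persists
with `2 C` near `T`. Hence `log` can be differentiated under the integral sign, and its derivative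
at `T` in a direction `B` commuting with `T` is `T⁻¹ B`.

For real `c ≠ 0`, integrating this derivative along the segment from `c` to `T` shows that
`c Im ⟪x, log T x⟫ ≥ c Im ⟪x, log c x⟫`. The cases `c = 1` and `c = -1`, where `log 1 = 0` and
`log (-1) = πi`, are the two bounds on `Im log T`. The segment may leave the invertible operators,
so it is first run to `T + iε`, and then `ε → 0`.
-/

open scoped Ring ComplexConjugate

section Dissipative

variable {E : Type*} [NormedAddCommGroup E] [InnerProductSpace ℂ E]

/-- Dissipativity `Im T ≥ 0`, expressed through the quadratic form of `T`. -/
def IsDissipative (T : E →L[ℂ] E) : Prop := ∀ x : E, 0 ≤ (⟪x, T x⟫_ℂ).im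

/-- The quadratic form `T ↦ ⟪x, T x⟫` as a continuous linear functional of the operator, which
lets it pass through integrals and derivatives. -/
def quadForm (x : E) : (E →L[ℂ] E) →L[ℂ] ℂ := innerSL ℂ x ∘L ContinuousLinearMap.apply ℂ E x

lemma quadForm_apply (x : E) (T : E →L[ℂ] E) : quadForm x T = ⟪x, T x⟫_ℂ := rfl

lemma quadForm_one (x : E) : quadForm x 1 = ((‖x‖ ^ 2 : ℝ) : ℂ) := by
  rw [quadForm_apply, one_apply_eq_self, inner_self_eq_norm_sq_to_K]
  exact (ofReal_pow _ _).symm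

lemma quadForm_smul_one (x : E) (c : ℂ) :
    quadForm x (c • (1 : E →L[ℂ] E)) = c * ((‖x‖ ^ 2 : ℝ) : ℂ) := by
  rw [map_smul, quadForm_one, smul_eq_mul]

lemma isDissipative_smul_one {c : ℂ} (hc : 0 ≤ c.im) : IsDissipative (c • (1 : E →L[ℂ] E)) := by
  intro x
  rw [← quadForm_apply, quadForm_smul_one, im_mul_ofReal]
  positivity

lemma inner_imPart_self (T : H →L[ℂ] H) (x : H) :
    ⟪imPart T x, x⟫_ℂ = ((⟪x, T x⟫_ℂ).im : ℂ) := by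
  have conj_sub (z : ℂ) : conj (2 * I)⁻¹ * (conj z - z) = z.im := by
    rw [← neg_sub, sub_conj, map_inv₀, map_mul, conj_I, map_ofNat]
    push_cast
    field
  rw [imPart, smul_apply, inner_smul_left, sub_apply, inner_sub_left, adjoint_inner_left,
    ← inner_conj_symm (T x) x, conj_sub]

lemma isPositive_imPart_iff (T : H →L[ℂ] H) : (imPart T).IsPositive ↔ IsDissipative T := by
  simp [isPositive_iff_complex, inner_imPart_self, IsDissipative]

lemma isPositive_smul_one_sub_imPart_iff (T : H →L[ℂ] H) (c : ℝ) :
    ((c : ℂ) • (1 : H →L[ℂ] H) - imPart T).IsPositive ↔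
      ∀ x : H, (⟪x, T x⟫_ℂ).im ≤ c * ‖x‖ ^ 2 := by
  have inner_eq (x : H) : ⟪((c : ℂ) • (1 : H →L[ℂ] H) - imPart T) x, x⟫_ℂ =
      ((c * ‖x‖ ^ 2 - (⟪x, T x⟫_ℂ).im : ℝ) : ℂ) := by
    rw [sub_apply, inner_sub_left, inner_imPart_self, smul_apply, inner_smul_left, conj_ofReal,
      one_apply_eq_self, inner_self_eq_norm_sq_to_K]
    push_cast
    rfl
  simp only [isPositive_iff_complex, inner_eq, RCLike.re_eq_complex_re, ofReal_re, true_and,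
    sub_nonneg]

lemma isUnit_of_mul_norm_sq_le_norm_inner {T : H →L[ℂ] H} {k : ℝ} (hk : 0 < k)
    (hT : ∀ x : H, k * ‖x‖ ^ 2 ≤ ‖⟪x, T x⟫_ℂ‖) : IsUnit T := by
  lift k to NNReal using hk.le
  refine isUnit_of_forall_le_norm_inner_map T (mod_cast hk) fun x => ?_
  rw [norm_inner_symm, mul_comm]
  exact hT x

namespace IsDissipative

variable {S T : E →L[ℂ] E}

lemma add (hS : IsDissipative S) (hT : IsDissipative T) : IsDissipative (S + T) := by
  intro x
  rw [add_apply, inner_add_right, add_im]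
  exact add_nonneg (hS x) (hT x)

lemma ofReal_smul (hT : IsDissipative T) {s : ℝ} (hs : 0 ≤ s) :
    IsDissipative ((s : ℂ) • T) := by
  intro x
  rw [smul_apply, inner_smul_right, im_ofReal_mul]
  exact mul_nonneg hs (hT x)

lemma im_mul_norm_sq_le (hT : IsDissipative T) (w : ℂ) (x : E) :
    w.im * ‖x‖ ^ 2 ≤ (⟪x, (T + w • (1 : E →L[ℂ] E)) x⟫_ℂ).im := by
  rw [← quadForm_apply, map_add, quadForm_smul_one, add_im, im_mul_ofReal]
  exact le_add_of_nonneg_left (hT x)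

lemma im_mul_norm_le (hT : IsDissipative T) (w : ℂ) (x : E) :
    w.im * ‖x‖ ≤ ‖(T + w • (1 : E →L[ℂ] E)) x‖ := by
  rcases (norm_nonneg x).eq_or_lt with hx | hx
  · simp [← hx]
  · refine le_of_mul_le_mul_left ?_ hx
    calc ‖x‖ * (w.im * ‖x‖) = w.im * ‖x‖ ^ 2 := by ring
      _ ≤ (⟪x, (T + w • (1 : E →L[ℂ] E)) x⟫_ℂ).im := hT.im_mul_norm_sq_le w x
      _ ≤ ‖x‖ * ‖(T + w • (1 : E →L[ℂ] E)) x‖ := (im_le_norm _).trans (norm_inner_le_norm _ _)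

lemma im_inner_inverse_nonpos (hT : IsDissipative T) (hU : IsUnit T) (x : E) :
    (⟪x, T⁻¹ʳ x⟫_ℂ).im ≤ 0 := by
  have mul_inverse : T (T⁻¹ʳ x) = x := congr($(Ring.mul_inverse_cancel T hU) x)
  have nonneg := hT (T⁻¹ʳ x)
  rw [mul_inverse, ← inner_conj_symm, conj_im] at nonneg
  exact neg_nonneg.1 nonneg

lemma isUnit_add_smul_one {T : H →L[ℂ] H} (hT : IsDissipative T) {w : ℂ} (hw : 0 < w.im) :
    IsUnit (T + w • (1 : H →L[ℂ] H)) :=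
  isUnit_of_mul_norm_sq_le_norm_inner hw fun x =>
    (hT.im_mul_norm_sq_le w x).trans (im_le_norm _)

lemma norm_inverse_add_smul_one_le {T : H →L[ℂ] H} (hT : IsDissipative T) {w : ℂ}
    (hw : 0 < w.im) : ‖(T + w • (1 : H →L[ℂ] H))⁻¹ʳ‖ ≤ w.im⁻¹ := by
  refine opNorm_le_bound _ (by positivity) fun x => ?_
  rw [le_inv_mul_iff₀ hw]
  set S := T + w • (1 : H →L[ℂ] H)
  have mul_inverse : S (S⁻¹ʳ x) = x :=
    congr($(Ring.mul_inverse_cancel S (hT.isUnit_add_smul_one hw)) x)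
  exact (hT.im_mul_norm_le w (S⁻¹ʳ x)).trans_eq (congrArg norm mul_inverse)

end IsDissipative

end Dissipative

section BoundedInvertibility

lemma norm_add_conj_sq (z w : ℂ) : ‖z + conj w‖ ^ 2 = ‖z - w‖ ^ 2 + 4 * z.re * w.re := by
  simp only [Complex.sq_norm, normSq_apply, add_re, add_im, sub_re, sub_im, conj_re, conj_im]
  ring

lemma norm_sub_div_add_conj_le_one {z w : ℂ} (hz : 0 ≤ z.re) (hw : 0 ≤ w.re) :
    ‖(z - w) / (z + conj w)‖ ≤ 1 := by
  rw [norm_div]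
  refine div_le_one_of_le₀ (le_of_sq_le_sq ?_ (norm_nonneg _)) (norm_nonneg _)
  rw [norm_add_conj_sq]
  exact le_add_of_nonneg_right (by positivity)

lemma harnack_re_le {f : ℂ → ℂ} {c w : ℂ} {R : ℝ} (hf : DifferentiableOn ℂ f (Metric.ball c R))
    (hre : ∀ z ∈ Metric.ball c R, 0 ≤ (f z).re) (hw : w ∈ Metric.ball c R) :
    (R - dist w c) * (f c).re ≤ (R + dist w c) * (f w).re := by
  have hwR : dist w c < R := hw
  have hR : 0 < R := dist_nonneg.trans_lt hwR
  have hc : c ∈ Metric.ball c R := Metric.mem_ball_self hR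
  rcases (hre c hc).eq_or_lt with hfc | hfc
  · rw [← hfc, mul_zero]
    exact mul_nonneg (by positivity) (hre w hw)
  have denom_ne (z : ℂ) (hz : z ∈ Metric.ball c R) : f z + conj (f c) ≠ 0 := fun h => by
    have := congr(($h).re)
    simp only [add_re, conj_re, zero_re] at this
    linarith [hre z hz]
  have schwarz := Complex.dist_le_div_mul_dist_of_mapsTo_ball (R₂ := 1)
    (f := fun z => (f z - f c) / (f z + conj (f c)))
    ((hf.sub_const _).div (hf.add_const _) denom_ne)
    (fun z hz => by simpa using norm_sub_div_add_conj_le_one (hre z hz) hfc.le) hw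
  rw [sub_self, zero_div, dist_zero_right, norm_div,
    div_le_iff₀ (norm_pos_iff.2 (denom_ne w hw)), one_div_mul_eq_div, div_mul_eq_mul_div,
    le_div_iff₀ hR] at schwarz
  have sq_le : (‖f w - f c‖ * R) ^ 2 ≤ (dist w c * ‖f w + conj (f c)‖) ^ 2 := by gcongr
  have dist_sq_le : dist w c ^ 2 ≤ R ^ 2 := by gcongr
  have sub_re_sq_le : ((f c).re - (f w).re) ^ 2 ≤ ‖f w - f c‖ ^ 2 := by
    rw [Complex.sq_norm, normSq_apply, sub_re, sub_im]
    nlinarith [sq_nonneg ((f w).im - (f c).im)]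
  have : (((f c).re - (f w).re) * R) ^ 2 ≤ (dist w c * ((f c).re + (f w).re)) ^ 2 := by
    rw [mul_pow, mul_pow, norm_add_conj_sq] at sq_le
    nlinarith [mul_nonneg (sub_nonneg.2 dist_sq_le) (sub_nonneg.2 sub_re_sq_le)]
  have := abs_le_of_sq_le_sq' this (mul_nonneg dist_nonneg (add_nonneg hfc.le (hre w hw)))
  linarith [this.2]

lemma IsDissipative.norm_sq_le_re_inner {E : Type*} [NormedAddCommGroup E]
    [InnerProductSpace ℂ E] {T : E →L[ℂ] E} (hT : IsDissipative T) (g : E) :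
    ‖T g‖ ^ 2 ≤ (⟪(T + I • (1 : E →L[ℂ] E)) g, T g⟫_ℂ).re := by
  have inner_eq : ⟪(T + I • (1 : E →L[ℂ] E)) g, T g⟫_ℂ = (‖T g‖ : ℂ) ^ 2 - I * ⟪g, T g⟫_ℂ := by
    rw [add_apply, inner_add_left, smul_apply, one_apply_eq_self, inner_smul_left, conj_I,
      inner_self_eq_norm_sq_to_K, neg_mul, sub_eq_add_neg]
    rfl
  rw [inner_eq, sub_re, I_mul_re, sub_neg_eq_add, ← ofReal_pow, ofReal_re]
  exact le_add_of_nonneg_right (hT g)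

/-- The transform `T (T + i)⁻¹` of a dissipative operator `T`. It is invertible exactly when `T`
is, and its quadratic form has nonnegative real part controlling its norm. -/
def regularization (T : H →L[ℂ] H) : H →L[ℂ] H := T * (T + I • (1 : H →L[ℂ] H))⁻¹ʳ

lemma IsDissipative.isUnit_regularization_iff {T : H →L[ℂ] H} (hT : IsDissipative T) :
    IsUnit (regularization T) ↔ IsUnit T := by
  have isUnit_inverse := (hT.isUnit_add_smul_one (w := I) (by simp)).ringInverse
  exact isUnit_inverse.mul_right_iff

lemma IsDissipative.norm_regularization_sq_le {T : H →L[ℂ] H} (hT : IsDissipative T) (f : H) :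
    ‖regularization T f‖ ^ 2 ≤ (quadForm f (regularization T)).re := by
  have hU := hT.isUnit_add_smul_one (w := I) (by simp)
  have mul_inverse : (T + I • (1 : H →L[ℂ] H)) ((T + I • (1 : H →L[ℂ] H))⁻¹ʳ f) = f :=
    congr($(Ring.mul_inverse_cancel _ hU) f)
  have := hT.norm_sq_le_re_inner ((T + I • (1 : H →L[ℂ] H))⁻¹ʳ f)
  rwa [mul_inverse] at this

lemma exists_pos_forall_mul_norm_le {E : Type*} [NormedAddCommGroup E] [NormedSpace ℂ E]
    {T : E →L[ℂ] E} (hU : IsUnit T) : ∃ k > 0, ∀ x : E, k * ‖x‖ ≤ ‖T x‖ := by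
  refine ⟨(‖T⁻¹ʳ‖ + 1)⁻¹, by positivity, fun x => ?_⟩
  rw [inv_mul_le_iff₀ (by positivity)]
  calc ‖x‖ = ‖T⁻¹ʳ (T x)‖ := congr(‖$(Ring.inverse_mul_cancel T hU) x‖).symm
    _ ≤ ‖T⁻¹ʳ‖ * ‖T x‖ := le_opNorm _ _
    _ ≤ (‖T⁻¹ʳ‖ + 1) * ‖T x‖ := by gcongr; exact le_add_of_nonneg_right zero_le_one

lemma isUnit_of_mem_ball {M : ℂ → H →L[ℂ] H} {c w : ℂ} {R : ℝ}
    (hM : DifferentiableOn ℂ M (Metric.ball c R))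
    (hdiss : ∀ z ∈ Metric.ball c R, IsDissipative (M z)) (hc : IsUnit (M c))
    (hw : w ∈ Metric.ball c R) : IsUnit (M w) := by
  have hcR : c ∈ Metric.ball c R := Metric.mem_ball_self (dist_nonneg.trans_lt hw)
  have hd : 0 < R - dist w c := sub_pos.2 hw
  have hs : 0 < R + dist w c := by linarith [dist_nonneg (x := w) (y := c)]
  have differentiableOn_quadForm (f : H) : DifferentiableOn ℂ
      (fun z => quadForm f (regularization (M z))) (Metric.ball c R) :=
    (quadForm f).differentiable.comp_differentiableOn
      (hM.mul ((hM.add_const _).inverse fun z hz => (hdiss z hz).isUnit_add_smul_one (by simp)))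
  obtain ⟨k, hk, bound⟩ :=
    exists_pos_forall_mul_norm_le ((hdiss c hcR).isUnit_regularization_iff.2 hc)
  have coercive (f : H) : (R - dist w c) / (R + dist w c) * k ^ 2 * ‖f‖ ^ 2 ≤
      (quadForm f (regularization (M w))).re := by
    rw [mul_assoc, ← mul_pow, div_mul_eq_mul_div, div_le_iff₀' hs]
    calc (R - dist w c) * (k * ‖f‖) ^ 2
        ≤ (R - dist w c) * (quadForm f (regularization (M c))).re := by
          gcongr
          exact (pow_le_pow_left₀ (by positivity) (bound f) 2).trans
            ((hdiss c hcR).norm_regularization_sq_le f)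
      _ ≤ (R + dist w c) * (quadForm f (regularization (M w))).re :=
          harnack_re_le (differentiableOn_quadForm f)
            (fun z hz => (sq_nonneg _).trans ((hdiss z hz).norm_regularization_sq_le f)) hw
  rw [← (hdiss w hw).isUnit_regularization_iff]
  exact isUnit_of_mul_norm_sq_le_norm_inner (k := (R - dist w c) / (R + dist w c) * k ^ 2)
    (by positivity) fun f => (coercive f).trans (re_le_norm _)

lemma isUnit_of_isPreconnected {M : ℂ → H →L[ℂ] H} {U : Set ℂ} (hUo : IsOpen U)
    (hUc : IsPreconnected U) (hM : DifferentiableOn ℂ M U) (hdiss : ∀ z ∈ U, IsDissipative (M z))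
    {z w : ℂ} (hz : z ∈ U) (hw : w ∈ U) (hMz : IsUnit (M z)) : IsUnit (M w) := by
  refine hUc.induction₂' (fun x y => IsUnit (M x) → IsUnit (M y)) (fun x hx => ?_)
    (fun _ _ _ _ _ _ hxy hyz h => hyz (hxy h)) hz hw hMz
  obtain ⟨r, hr, hball⟩ := Metric.isOpen_iff.1 hUo x hx
  filter_upwards [mem_nhdsWithin_of_mem_nhds (Metric.ball_mem_nhds x (half_pos hr))] with y hy
  have hsub : Metric.ball y (r / 2) ⊆ U :=
    (Metric.ball_subset_ball' (by linarith [Metric.mem_ball.1 hy])).trans hball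
  exact ⟨fun h => isUnit_of_mem_ball (hM.mono hball) (fun z hz => hdiss z (hball hz)) h
      (Metric.ball_subset_ball (half_le_self hr.le) hy),
    fun h => isUnit_of_mem_ball (hM.mono hsub) (fun z hz => hdiss z (hsub hz)) h
      (Metric.mem_ball_comm.1 hy)⟩

end BoundedInvertibility

section RayResolvent

variable {A : Type*} [NormedRing A] {a b : A}

lemma commute_ringInverse {M₀ : Type*} [MonoidWithZero M₀] {a b : M₀} (ha : IsUnit a)
    (hba : Commute b a) : Commute b a⁻¹ʳ := by
  obtain ⟨u, rfl⟩ := ha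
  rw [Ring.inverse_unit]
  exact hba.units_inv_right

lemma isUnit_of_norm_inverse_mul_norm_sub_lt_one [CompleteSpace A] (ha : IsUnit a)
    (h : ‖a⁻¹ʳ‖ * ‖b - a‖ < 1) : IsUnit b := by
  have factor : b = a * (1 - a⁻¹ʳ * (a - b)) := by
    rw [mul_sub, mul_one, ← mul_assoc, Ring.mul_inverse_cancel a ha, one_mul, sub_sub_cancel]
  rw [factor]
  refine ha.mul (isUnit_one_sub_of_norm_lt_one ((norm_mul_le _ _).trans_lt ?_))
  rwa [norm_sub_rev]

lemma norm_inverse_le_two_mul (ha : IsUnit a) (hb : IsUnit b) (h : ‖a⁻¹ʳ‖ * ‖b - a‖ ≤ 1 / 2) :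
    ‖b⁻¹ʳ‖ ≤ 2 * ‖a⁻¹ʳ‖ := by
  have resolvent_identity : b⁻¹ʳ = a⁻¹ʳ - a⁻¹ʳ * (b - a) * b⁻¹ʳ := by
    rw [← Ring.inverse_sub_inverse (iff_of_true ha hb), sub_sub_cancel]
  have : ‖b⁻¹ʳ‖ ≤ ‖a⁻¹ʳ‖ + 1 / 2 * ‖b⁻¹ʳ‖ := by
    calc ‖b⁻¹ʳ‖ = ‖a⁻¹ʳ - a⁻¹ʳ * (b - a) * b⁻¹ʳ‖ := congrArg norm resolvent_identity
      _ ≤ ‖a⁻¹ʳ‖ + ‖a⁻¹ʳ‖ * ‖b - a‖ * ‖b⁻¹ʳ‖ := (norm_sub_le _ _).trans (by grw [norm_mul₃_le])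
      _ ≤ ‖a⁻¹ʳ‖ + 1 / 2 * ‖b⁻¹ʳ‖ := by gcongr
  linarith

variable [NormedAlgebra ℂ A] {C : ℝ}

lemma norm_inv_one_add_mul_I_sq (t : ℝ) : ‖((1 : ℂ) + t * I)⁻¹‖ ^ 2 = (1 + t ^ 2)⁻¹ := by
  rw [norm_inv, inv_pow, Complex.sq_norm, ← ofReal_one, normSq_add_mul_I, one_pow]

lemma norm_inv_one_add_mul_I_le_one (t : ℝ) : ‖((1 : ℂ) + t * I)⁻¹‖ ≤ 1 := by
  refine (sq_le_one_iff₀ (norm_nonneg _)).1 ?_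
  rw [norm_inv_one_add_mul_I_sq]
  exact inv_le_one_of_one_le₀ (le_add_of_nonneg_right (sq_nonneg t))

lemma norm_one_add_mul_I_le {t : ℝ} (ht : 0 ≤ t) : ‖(1 : ℂ) + t * I‖ ≤ 1 + t := by
  refine (norm_add_le _ _).trans_eq ?_
  rw [norm_one, norm_mul, norm_I, mul_one, norm_real, Real.norm_of_nonneg ht]

lemma one_add_mul_I_ne_zero (t : ℝ) : (1 : ℂ) + t * I ≠ 0 := fun h => by
  simpa using congr(($h).re)

lemma hasFDerivAt_ringInverse_of_isUnit [CompleteSpace A] (ha : IsUnit a) :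
    HasFDerivAt Ring.inverse (-mulLeftRight ℂ A a⁻¹ʳ a⁻¹ʳ) a := by
  simpa only [← Ring.inverse_unit, IsUnit.unit_spec] using
    hasFDerivAt_ringInverse (𝕜 := ℂ) ha.unit

/-- The resolvent `(a + it)⁻¹` of `a` along the negative imaginary axis. -/
def rayResolvent (a : A) (t : ℝ) : A := (a + ((t : ℂ) * I) • (1 : A))⁻¹ʳ

/-- The negative imaginary half-axis lies in the resolvent set of `a`, and the resolvent of `a`
along it is bounded by `C` times that of the scalar `1`. This makes the integral defining `log a`
converge absolutely. -/
structure RayBound (C : ℝ) (a : A) : Prop where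
  isUnit : ∀ ⦃t : ℝ⦄, 0 ≤ t → IsUnit (a + ((t : ℂ) * I) • (1 : A))
  norm_le : ∀ ⦃t : ℝ⦄, 0 ≤ t → ‖rayResolvent a t‖ ≤ C * ‖((1 : ℂ) + t * I)⁻¹‖

lemma rayResolvent_neg_one (t : ℝ) :
    rayResolvent (-1 : A) t = ((-1 : ℂ) + t * I)⁻¹ • (1 : A) := by
  have ne_zero : (-1 : ℂ) + t * I ≠ 0 := fun h => by simpa using congr(($h).re)
  have factor : (-1 : A) + ((t : ℂ) * I) • (1 : A) = algebraMap ℂ A (-1 + t * I) := by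
    rw [Algebra.algebraMap_eq_smul_one, add_smul, neg_one_smul]
  have isUnit : IsUnit (algebraMap ℂ A (-1 + t * I)) := (IsUnit.mk0 _ ne_zero).map _
  rw [rayResolvent, factor, ← one_mul (_)⁻¹ʳ, eq_comm, Ring.eq_mul_inverse_iff_mul_eq _ _ _ isUnit,
    ← Algebra.algebraMap_eq_smul_one, ← map_mul, inv_mul_cancel₀ ne_zero, map_one]

lemma rayResolvent_zero (a : A) : rayResolvent a 0 = a⁻¹ʳ := by
  rw [rayResolvent, ofReal_zero, zero_mul, zero_smul, add_zero]

namespace RayBound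

lemma nonneg (h : RayBound C a) : 0 ≤ C := by
  simpa using (norm_nonneg _).trans (h.norm_le le_rfl)

lemma norm_le_const (h : RayBound C a) {t : ℝ} (ht : 0 ≤ t) : ‖rayResolvent a t‖ ≤ C :=
  (h.norm_le ht).trans (mul_le_of_le_one_right h.nonneg (norm_inv_one_add_mul_I_le_one t))

lemma norm_sq_le (h : RayBound C a) {t : ℝ} (ht : 0 ≤ t) :
    ‖rayResolvent a t‖ ^ 2 ≤ C ^ 2 * (1 + t ^ 2)⁻¹ := by
  rw [← norm_inv_one_add_mul_I_sq, ← mul_pow]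
  exact pow_le_pow_left₀ (norm_nonneg _) (h.norm_le ht) 2

lemma norm_mulLeftRight_le (h : RayBound C a) {t : ℝ} (ht : 0 ≤ t) :
    ‖mulLeftRight ℂ A (rayResolvent a t) (rayResolvent a t)‖ ≤ C ^ 2 * (1 + t ^ 2)⁻¹ :=
  (opNorm_mulLeftRight_apply_apply_le ℂ A _ _).trans ((sq _).ge.trans (h.norm_sq_le ht))

lemma tendsto_rayResolvent (h : RayBound C a) : Tendsto (rayResolvent a) atTop (𝓝 0) := by
  have scalar : Tendsto (fun t : ℝ => ‖((1 : ℂ) + t * I)⁻¹‖) atTop (𝓝 0) := by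
    have := (tendsto_inv_atTop_zero.comp (tendsto_atTop_add_const_left _ 1
      (tendsto_pow_atTop (α := ℝ) two_ne_zero))).sqrt
    rw [Real.sqrt_zero] at this
    refine this.congr fun t => ?_
    rw [Function.comp_apply, ← norm_inv_one_add_mul_I_sq, Real.sqrt_sq (norm_nonneg _)]
  refine squeeze_zero_norm' ?_ (by simpa only [mul_zero] using scalar.const_mul C)
  filter_upwards [eventually_ge_atTop 0] with t ht using h.norm_le ht

variable [CompleteSpace A]

lemma of_norm_sub_le (h : RayBound C a) (hab : C * ‖b - a‖ ≤ 1 / 2) : RayBound (2 * C) b := by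
  have small ⦃t : ℝ⦄ (ht : 0 ≤ t) : ‖rayResolvent a t‖ *
      ‖(b + ((t : ℂ) * I) • (1 : A)) - (a + ((t : ℂ) * I) • (1 : A))‖ ≤ 1 / 2 := by
    rw [add_sub_add_right_eq_sub]
    exact (mul_le_mul_of_nonneg_right (h.norm_le_const ht) (norm_nonneg _)).trans hab
  have isUnit ⦃t : ℝ⦄ (ht : 0 ≤ t) : IsUnit (b + ((t : ℂ) * I) • (1 : A)) :=
    isUnit_of_norm_inverse_mul_norm_sub_lt_one (h.isUnit ht) ((small ht).trans_lt one_half_lt_one)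
  refine ⟨isUnit, fun t ht => ?_⟩
  calc ‖rayResolvent b t‖ ≤ 2 * ‖rayResolvent a t‖ :=
        norm_inverse_le_two_mul (h.isUnit ht) (isUnit ht) (small ht)
    _ ≤ 2 * C * ‖((1 : ℂ) + t * I)⁻¹‖ := by
        rw [mul_assoc]
        gcongr
        exact h.norm_le ht

lemma eventually_nhds (h : RayBound C a) : ∀ᶠ b in 𝓝 a, RayBound (2 * C) b := by
  have : Tendsto (fun b => C * ‖b - a‖) (𝓝 a) (𝓝 0) := by
    have : Continuous fun b => C * ‖b - a‖ := by fun_prop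
    simpa using this.tendsto a
  filter_upwards [this.eventually_le_const one_half_pos] with b hb using h.of_norm_sub_le hb

lemma hasFDerivAt_rayResolvent (h : RayBound C a) {t : ℝ} (ht : 0 ≤ t) :
    HasFDerivAt (fun b : A => rayResolvent b t)
      (-mulLeftRight ℂ A (rayResolvent a t) (rayResolvent a t)) a :=
  ((hasFDerivAt_ringInverse_of_isUnit (h.isUnit ht)).comp a
    ((hasFDerivAt_id a).add_const _)).congr_fderiv (comp_id _)

lemma hasDerivAt_rayResolvent (h : RayBound C a) {t : ℝ} (ht : 0 ≤ t) :
    HasDerivAt (rayResolvent a) (-I • (rayResolvent a t * rayResolvent a t)) t := by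
  have line : HasDerivAt (fun s : ℝ => a + ((s : ℂ) * I) • (1 : A)) (I • (1 : A)) t := by
    have := ((hasDerivAt_id t).ofReal_comp.mul_const I).smul_const (1 : A)
    rw [ofReal_one, one_mul] at this
    exact this.const_add a
  refine (((hasFDerivAt_ringInverse_of_isUnit (h.isUnit ht)).restrictScalars ℝ).comp_hasDerivAt
    t line).congr_deriv ?_
  simp [rayResolvent]

lemma continuousOn_rayResolvent (h : RayBound C a) :
    ContinuousOn (rayResolvent a) (Set.Ici 0) := fun _ ht =>
  (h.hasDerivAt_rayResolvent ht).continuousAt.continuousWithinAt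

lemma integrableOn_rayResolvent_sq (h : RayBound C a) :
    IntegrableOn (fun t => rayResolvent a t * rayResolvent a t) (Set.Ioi 0) := by
  refine Integrable.mono' (integrable_inv_one_add_sq.const_mul (C ^ 2)).integrableOn
    (((h.continuousOn_rayResolvent.mul h.continuousOn_rayResolvent).mono
      Set.Ioi_subset_Ici_self).aestronglyMeasurable measurableSet_Ioi)
    (ae_restrict_of_forall_mem measurableSet_Ioi fun t ht => ?_)
  exact (norm_mul_le _ _).trans ((sq _).ge.trans (h.norm_sq_le (Set.mem_Ioi.1 ht).le))

lemma integral_rayResolvent_sq (h : RayBound C a) :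
    ∫ t in Set.Ioi 0, rayResolvent a t * rayResolvent a t = -I • a⁻¹ʳ := by
  have ftc := integral_Ioi_of_hasDerivAt_of_tendsto'
    (f := fun t => I • rayResolvent a t) (m := 0)
    (fun t ht => ((h.hasDerivAt_rayResolvent ht).const_smul I).congr_deriv (by simp [smul_smul]))
    h.integrableOn_rayResolvent_sq (by simpa using h.tendsto_rayResolvent.const_smul I)
  rw [ftc, rayResolvent_zero, zero_sub, neg_smul]

lemma integrableOn_mulLeftRight_rayResolvent (h : RayBound C a) :
    IntegrableOn (fun t => mulLeftRight ℂ A (rayResolvent a t) (rayResolvent a t)) (Set.Ioi 0) := by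
  have continuousOn := ((mulLeftRight ℂ A).continuous.comp_continuousOn
    h.continuousOn_rayResolvent).clm_apply h.continuousOn_rayResolvent
  refine Integrable.mono' (integrable_inv_one_add_sq.const_mul (C ^ 2)).integrableOn
    ((continuousOn.mono Set.Ioi_subset_Ici_self).aestronglyMeasurable measurableSet_Ioi)
    (ae_restrict_of_forall_mem measurableSet_Ioi fun t ht => ?_)
  exact h.norm_mulLeftRight_le (Set.mem_Ioi.1 ht).le

lemma integral_mulLeftRight_rayResolvent_apply (h : RayBound C a) (hab : Commute b a) :
    (∫ t in Set.Ioi 0, mulLeftRight ℂ A (rayResolvent a t) (rayResolvent a t)) b =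
      -I • (a⁻¹ʳ * b) := by
  rw [integral_apply h.integrableOn_mulLeftRight_rayResolvent, ← smul_mul_assoc,
    ← h.integral_rayResolvent_sq, ← integral_mul_const_of_integrable h.integrableOn_rayResolvent_sq]
  refine setIntegral_congr_fun measurableSet_Ioi fun t ht => ?_
  have commute : Commute b (rayResolvent a t) :=
    commute_ringInverse (h.isUnit (Set.mem_Ioi.1 ht).le)
      (hab.add_right ((Commute.one_right b).smul_right _))
  simp only [mulLeftRight_apply, mul_assoc, commute.eq]

end RayBound

end RayResolvent

section OperatorLogarithm

variable {T : H →L[ℂ] H} {C : ℝ}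

namespace IsDissipative

lemma isUnit_add_mul_I_smul_one (hT : IsDissipative T) (hU : IsUnit T) {t : ℝ} (ht : 0 ≤ t) :
    IsUnit (T + ((t : ℂ) * I) • (1 : H →L[ℂ] H)) := by
  rcases ht.eq_or_lt with rfl | ht
  · simpa using hU
  · exact hT.isUnit_add_smul_one (by simpa using ht)

lemma mul_norm_rayResolvent_le_one (hT : IsDissipative T) {t : ℝ} (ht : 0 ≤ t) :
    t * ‖rayResolvent T t‖ ≤ 1 := by
  have im_mul_I : ((t : ℂ) * I).im = t := by simp
  rcases ht.eq_or_lt with rfl | ht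
  · simp
  · rw [← le_inv_mul_iff₀ ht, mul_one]
    exact (hT.norm_inverse_add_smul_one_le (im_mul_I.symm ▸ ht)).trans_eq (congrArg _ im_mul_I)

lemma norm_rayResolvent_le (hT : IsDissipative T) (hU : IsUnit T) {t : ℝ} (ht : 0 ≤ t) :
    ‖rayResolvent T t‖ ≤ 2 * ‖T⁻¹ʳ‖ := by
  have resolvent_identity :
      rayResolvent T t = T⁻¹ʳ - T⁻¹ʳ * (((t : ℂ) * I) • rayResolvent T t) := by
    have := Ring.inverse_sub_inverse (iff_of_true hU (hT.isUnit_add_mul_I_smul_one hU ht))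
    rw [add_sub_cancel_left, mul_smul_one, smul_mul_assoc, ← mul_smul_comm] at this
    rw [rayResolvent, ← this, sub_sub_cancel]
  calc ‖rayResolvent T t‖ = ‖T⁻¹ʳ - T⁻¹ʳ * (((t : ℂ) * I) • rayResolvent T t)‖ :=
        congrArg norm resolvent_identity
    _ ≤ ‖T⁻¹ʳ‖ + ‖T⁻¹ʳ‖ * (t * ‖rayResolvent T t‖) := by
        refine (norm_sub_le _ _).trans (add_le_add_right ((norm_mul_le _ _).trans_eq ?_) _)
        rw [norm_smul, norm_mul, norm_I, mul_one, norm_real, Real.norm_of_nonneg ht]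
    _ ≤ ‖T⁻¹ʳ‖ + ‖T⁻¹ʳ‖ * 1 := by gcongr; exact hT.mul_norm_rayResolvent_le_one ht
    _ = 2 * ‖T⁻¹ʳ‖ := by ring

lemma exists_rayBound (hT : IsDissipative T) (hU : IsUnit T) : ∃ C, RayBound C T := by
  refine ⟨2 * ‖T⁻¹ʳ‖ + 1, fun t ht => hT.isUnit_add_mul_I_smul_one hU ht, fun t ht => ?_⟩
  rw [norm_inv, ← div_eq_mul_inv, le_div_iff₀ (norm_pos_iff.2 (one_add_mul_I_ne_zero t))]
  calc ‖rayResolvent T t‖ * ‖(1 : ℂ) + t * I‖ ≤ ‖rayResolvent T t‖ * (1 + t) := by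
        gcongr
        exact norm_one_add_mul_I_le ht
    _ = ‖rayResolvent T t‖ + t * ‖rayResolvent T t‖ := by ring
    _ ≤ 2 * ‖T⁻¹ʳ‖ + 1 :=
        add_le_add (hT.norm_rayResolvent_le hU ht) (hT.mul_norm_rayResolvent_le_one ht)

end IsDissipative

namespace RayBound

lemma logIntegrand_eq (h : RayBound C T) {t : ℝ} (ht : 0 ≤ t) :
    logIntegrand T t = ((1 : ℂ) + t * I)⁻¹ • (rayResolvent T t * (1 - T)) := by
  have resolvent_eq : rayResolvent T t * T + ((t : ℂ) * I) • rayResolvent T t = 1 := by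
    rw [← mul_smul_one, ← mul_add]
    exact Ring.inverse_mul_cancel _ (h.isUnit ht)
  have logIntegrand_eq_sub : logIntegrand T t =
      rayResolvent T t - ((1 : ℂ) + t * I)⁻¹ • (1 : H →L[ℂ] H) := rfl
  rw [eq_inv_smul_iff₀ (one_add_mul_I_ne_zero t), logIntegrand_eq_sub, smul_sub,
    smul_inv_smul₀ (one_add_mul_I_ne_zero t), mul_sub, mul_one, add_smul, one_smul,
    ← resolvent_eq]
  abel

lemma norm_logIntegrand_le (h : RayBound C T) {t : ℝ} (ht : 0 ≤ t) :
    ‖logIntegrand T t‖ ≤ C * ‖1 - T‖ * (1 + t ^ 2)⁻¹ := by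
  rw [h.logIntegrand_eq ht, norm_smul, ← norm_inv_one_add_mul_I_sq]
  calc ‖((1 : ℂ) + t * I)⁻¹‖ * ‖rayResolvent T t * (1 - T)‖
      ≤ ‖((1 : ℂ) + t * I)⁻¹‖ * (C * ‖((1 : ℂ) + t * I)⁻¹‖ * ‖1 - T‖) := by
        gcongr
        exact (norm_mul_le _ _).trans (by gcongr; exact h.norm_le ht)
    _ = C * ‖1 - T‖ * ‖((1 : ℂ) + t * I)⁻¹‖ ^ 2 := by ring

lemma aestronglyMeasurable_logIntegrand (h : RayBound C T) :
    AEStronglyMeasurable (logIntegrand T) (volume.restrict (Set.Ioi 0)) := by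
  have scalar : Continuous fun t : ℝ => ((1 : ℂ) + t * I)⁻¹ :=
    (by fun_prop : Continuous fun t : ℝ => (1 : ℂ) + t * I).inv₀ one_add_mul_I_ne_zero
  exact ((h.continuousOn_rayResolvent.sub
    (scalar.smul continuous_const).continuousOn).mono
      Set.Ioi_subset_Ici_self).aestronglyMeasurable measurableSet_Ioi

lemma integrableOn_logIntegrand (h : RayBound C T) :
    IntegrableOn (logIntegrand T) (Set.Ioi 0) :=
  Integrable.mono' (integrable_inv_one_add_sq.const_mul (C * ‖1 - T‖)).integrableOn
    h.aestronglyMeasurable_logIntegrand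
    (ae_restrict_of_forall_mem measurableSet_Ioi fun _ ht =>
      h.norm_logIntegrand_le (Set.mem_Ioi.1 ht).le)

lemma opLog_eq_integral (h : RayBound C T) :
    opLog T = -I • ∫ t in Set.Ioi 0, logIntegrand T t :=
  ((intervalIntegral_tendsto_integral_Ioi 0 h.integrableOn_logIntegrand
    tendsto_id).const_smul (-I)).limUnder_eq

lemma hasFDerivAt_logIntegrand (h : RayBound C T) {t : ℝ} (ht : 0 ≤ t) :
    HasFDerivAt (fun S : H →L[ℂ] H => logIntegrand S t)
      (-mulLeftRight ℂ (H →L[ℂ] H) (rayResolvent T t) (rayResolvent T t)) T :=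
  (h.hasFDerivAt_rayResolvent ht).sub_const _

lemma hasFDerivAt_opLog (h : RayBound C T) :
    HasFDerivAt opLog (I • ∫ t in Set.Ioi 0,
      mulLeftRight ℂ (H →L[ℂ] H) (rayResolvent T t) (rayResolvent T t)) T := by
  have integral := hasFDerivAt_integral_of_dominated_of_fderiv_le h.eventually_nhds
    (h.eventually_nhds.mono fun _ hS => hS.aestronglyMeasurable_logIntegrand)
    h.integrableOn_logIntegrand
    h.integrableOn_mulLeftRight_rayResolvent.aestronglyMeasurable.neg
    (ae_restrict_of_forall_mem measurableSet_Ioi fun t ht _ hS =>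
      (norm_neg _).trans_le (hS.norm_mulLeftRight_le (Set.mem_Ioi.1 ht).le))
    (integrable_inv_one_add_sq.const_mul ((2 * C) ^ 2)).integrableOn
    (ae_restrict_of_forall_mem measurableSet_Ioi fun t ht _ hS =>
      hS.hasFDerivAt_logIntegrand (Set.mem_Ioi.1 ht).le)
  refine ((integral.const_smul (-I)).congr_of_eventuallyEq
    (h.eventually_nhds.mono fun _ hS => hS.opLog_eq_integral)).congr_fderiv ?_
  rw [integral_neg, smul_neg, neg_smul, neg_neg]

lemma hasDerivAt_opLog_comp {p : ℝ → H →L[ℂ] H} {p' : H →L[ℂ] H} {s : ℝ}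
    (h : RayBound C (p s)) (hp : HasDerivAt p p' s) (hcomm : Commute p' (p s)) :
    HasDerivAt (fun u => opLog (p u)) ((p s)⁻¹ʳ * p') s := by
  refine ((h.hasFDerivAt_opLog.restrictScalars ℝ).comp_hasDerivAt s hp).congr_deriv ?_
  rw [coe_restrictScalars', smul_apply, h.integral_mulLeftRight_rayResolvent_apply hcomm,
    smul_smul, mul_neg, I_mul_I, neg_neg, one_smul]

end RayBound

end OperatorLogarithm

section ScalarSegment

variable {E : Type*} [NormedAddCommGroup E] [InnerProductSpace ℂ E] {T : E →L[ℂ] E}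

/-- The segment from `c` to `T`, parametrized by `s ∈ [0, 1]`. -/
def scalarSegment (c : ℝ) (T : E →L[ℂ] E) (s : ℝ) : E →L[ℂ] E :=
  (((1 - s) * c : ℝ) : ℂ) • (1 : E →L[ℂ] E) + (s : ℂ) • T

lemma isDissipative_scalarSegment (hT : IsDissipative T) (c : ℝ) {s : ℝ} (hs : 0 ≤ s) :
    IsDissipative (scalarSegment c T s) :=
  (isDissipative_smul_one (ofReal_im _).ge).add (hT.ofReal_smul hs)

lemma hasDerivAt_scalarSegment (c : ℝ) (T : E →L[ℂ] E) (s : ℝ) :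
    HasDerivAt (scalarSegment c T) (T - (c : ℂ) • (1 : E →L[ℂ] E)) s := by
  have left := ((((hasDerivAt_id s).const_sub 1).mul_const c).ofReal_comp).smul_const
    (1 : E →L[ℂ] E)
  have right := (hasDerivAt_id s).ofReal_comp.smul_const T
  refine (left.add right).congr_deriv ?_
  simp [sub_eq_neg_add]

lemma commute_scalarSegment (c : ℝ) (T : E →L[ℂ] E) (s : ℝ) :
    Commute (T - (c : ℂ) • (1 : E →L[ℂ] E)) (scalarSegment c T s) := by
  have scalar_right (S : E →L[ℂ] E) (w : ℂ) : Commute S (w • (1 : E →L[ℂ] E)) :=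
    (Commute.one_right S).smul_right w
  exact (scalar_right _ _).add_right
    (((Commute.refl T).sub_left (scalar_right T _).symm).smul_right _)

lemma smul_inverse_scalarSegment_mul (c : ℝ) {s : ℝ} (hU : IsUnit (scalarSegment c T s)) :
    (s : ℂ) • ((scalarSegment c T s)⁻¹ʳ * (T - (c : ℂ) • (1 : E →L[ℂ] E))) =
      1 - (c : ℂ) • (scalarSegment c T s)⁻¹ʳ := by
  have direction : (s : ℂ) • (T - (c : ℂ) • (1 : E →L[ℂ] E)) =
      scalarSegment c T s - (c : ℂ) • (1 : E →L[ℂ] E) := by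
    rw [scalarSegment]
    push_cast
    module
  rw [← mul_smul_comm, direction, mul_sub, Ring.inverse_mul_cancel _ hU, mul_smul_one]

lemma mul_im_quadForm_inverse_mul_nonneg (hT : IsDissipative T) (c : ℝ) {s : ℝ} (hs : 0 < s)
    (hU : IsUnit (scalarSegment c T s)) (x : E) :
    0 ≤ c * (quadForm x ((scalarSegment c T s)⁻¹ʳ * (T - (c : ℂ) • (1 : E →L[ℂ] E)))).im := by
  set R := (scalarSegment c T s)⁻¹ʳ
  have inverse_nonpos : (quadForm x R).im ≤ 0 :=
    (isDissipative_scalarSegment hT c hs.le).im_inner_inverse_nonpos hU x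
  have mul_im_eq : s * (quadForm x (R * (T - (c : ℂ) • (1 : E →L[ℂ] E)))).im =
      -(c * (quadForm x R).im) := by
    rw [← im_ofReal_mul, ← smul_eq_mul, ← map_smul, smul_inverse_scalarSegment_mul c hU, map_sub,
      map_smul, quadForm_one, smul_eq_mul, sub_im, ofReal_im, im_ofReal_mul, zero_sub]
  refine nonneg_of_mul_nonneg_right (a := s) ?_ hs
  rw [mul_left_comm, mul_im_eq]
  nlinarith [sq_nonneg c]

end ScalarSegment

section ImaginaryPart

variable {T : H →L[ℂ] H}

lemma opLog_one : opLog (1 : H →L[ℂ] H) = 0 := by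
  have hdiss : IsDissipative (1 : H →L[ℂ] H) := by
    simpa using isDissipative_smul_one (E := H) (c := 1) (by simp)
  obtain ⟨C, h⟩ := hdiss.exists_rayBound isUnit_one
  have integrand_eq_zero (t : ℝ) (ht : t ∈ Set.Ioi 0) : logIntegrand (1 : H →L[ℂ] H) t = 0 := by
    rw [h.logIntegrand_eq (Set.mem_Ioi.1 ht).le, sub_self, mul_zero, smul_zero]
  rw [h.opLog_eq_integral, setIntegral_eq_zero_of_forall_eq_zero integrand_eq_zero, smul_zero]

lemma opLog_neg_one : opLog (-1 : H →L[ℂ] H) = ((Real.pi : ℂ) * I) • (1 : H →L[ℂ] H) := by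
  have hdiss : IsDissipative (-1 : H →L[ℂ] H) := by
    simpa using isDissipative_smul_one (E := H) (c := -1) (by simp)
  obtain ⟨C, h⟩ := hdiss.exists_rayBound isUnit_one.neg
  have integrand_eq (t : ℝ) (ht : t ∈ Set.Ioi 0) : logIntegrand (-1 : H →L[ℂ] H) t =
      (1 + t ^ 2)⁻¹ • ((-2 : ℂ) • (1 : H →L[ℂ] H)) := by
    have scalar_eq : ((1 : ℂ) + t * I)⁻¹ * (-1 + t * I)⁻¹ * 2 = ((1 + t ^ 2)⁻¹ : ℝ) * (-2) := by
      have denominators : ((1 : ℂ) + t * I) * (-1 + t * I) = -(1 + t ^ 2) := by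
        linear_combination (t : ℂ) ^ 2 * I_sq
      rw [← mul_inv, denominators, inv_neg]
      push_cast
      ring
    have one_sub_neg_one : (1 : H →L[ℂ] H) - -1 = (2 : ℂ) • (1 : H →L[ℂ] H) := by
      rw [sub_neg_eq_add, two_smul]
    rw [h.logIntegrand_eq (Set.mem_Ioi.1 ht).le, rayResolvent_neg_one, one_sub_neg_one,
      smul_one_mul, smul_smul, smul_smul, scalar_eq, mul_smul, coe_smul]
  rw [h.opLog_eq_integral, setIntegral_congr_fun measurableSet_Ioi integrand_eq,
    integral_smul_const, integral_Ioi_inv_one_add_sq, Real.arctan_zero, sub_zero,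
    ← coe_smul, smul_smul, smul_smul]
  congr 1
  push_cast
  ring

lemma isUnit_scalarSegment (hT : IsDissipative T) {c ε s : ℝ} (hc : c ≠ 0) (hε : 0 < ε)
    (hs : 0 ≤ s) :
    IsUnit (scalarSegment c (T + ((ε : ℂ) * I) • (1 : H →L[ℂ] H)) s) := by
  rcases hs.eq_or_lt with rfl | hs
  · have : IsUnit ((c : ℂ) • (1 : H →L[ℂ] H)) :=
      (isUnit_smul_iff (Units.mk0 (c : ℂ) (ofReal_ne_zero.2 hc)) _).2 isUnit_one
    simpa [scalarSegment] using this
  · have shift : scalarSegment c (T + ((ε : ℂ) * I) • (1 : H →L[ℂ] H)) s =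
        scalarSegment c T s + ((s : ℂ) * (ε * I)) • (1 : H →L[ℂ] H) := by
      rw [scalarSegment, scalarSegment, smul_add, smul_smul, add_assoc]
    rw [shift]
    exact (isDissipative_scalarSegment hT c hs.le).isUnit_add_smul_one
      (by simpa using mul_pos hs hε)

lemma mul_im_quadForm_opLog_le_add (hT : IsDissipative T) {c ε : ℝ} (hc : c ≠ 0) (hε : 0 < ε)
    (x : H) : c * (quadForm x (opLog ((c : ℂ) • (1 : H →L[ℂ] H)))).im ≤
      c * (quadForm x (opLog (T + ((ε : ℂ) * I) • (1 : H →L[ℂ] H)))).im := by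
  set S := T + ((ε : ℂ) * I) • (1 : H →L[ℂ] H)
  have hS : IsDissipative S := hT.add (isDissipative_smul_one (by simpa using hε.le))
  have isUnit {s : ℝ} (hs : 0 ≤ s) := isUnit_scalarSegment hT hc hε hs
  let g (s : ℝ) : ℝ := c * (quadForm x (opLog (scalarSegment c S s))).im
  have hasDerivAt {s : ℝ} (hs : 0 ≤ s) : HasDerivAt g (c * (quadForm x
      ((scalarSegment c S s)⁻¹ʳ * (S - (c : ℂ) • (1 : H →L[ℂ] H)))).im) s := by
    obtain ⟨C, h⟩ := (isDissipative_scalarSegment hS c hs).exists_rayBound (isUnit hs)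
    have log := h.hasDerivAt_opLog_comp (hasDerivAt_scalarSegment c S s)
      (commute_scalarSegment c S s)
    exact (imCLM.hasFDerivAt.comp_hasDerivAt s
      (((quadForm x).restrictScalars ℝ).hasFDerivAt.comp_hasDerivAt s log)).const_mul c
  have monotoneOn : MonotoneOn g (Set.Icc 0 1) := by
    refine monotoneOn_of_hasDerivWithinAt_nonneg (convex_Icc 0 1)
      (fun s hs => (hasDerivAt hs.1).continuousAt.continuousWithinAt)
      (fun s hs => (hasDerivAt (interior_subset hs).1).hasDerivWithinAt) fun s hs => ?_
    rw [interior_Icc] at hs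
    exact mul_im_quadForm_inverse_mul_nonneg hS c hs.1 (isUnit hs.1.le) x
  simpa [g, scalarSegment] using monotoneOn (Set.left_mem_Icc.2 zero_le_one)
    (Set.right_mem_Icc.2 zero_le_one) zero_le_one

lemma mul_im_quadForm_opLog_le (hT : IsDissipative T) (hU : IsUnit T) {c : ℝ} (hc : c ≠ 0)
    (x : H) : c * (quadForm x (opLog ((c : ℂ) • (1 : H →L[ℂ] H)))).im ≤
      c * (quadForm x (opLog T)).im := by
  obtain ⟨C, h⟩ := hT.exists_rayBound hU
  have shift_tendsto : Tendsto (fun ε : ℝ => T + ((ε : ℂ) * I) • (1 : H →L[ℂ] H)) (𝓝[>] 0)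
      (𝓝 T) := by
    have : Continuous fun ε : ℝ => T + ((ε : ℂ) * I) • (1 : H →L[ℂ] H) := by fun_prop
    simpa using (this.tendsto 0).mono_left nhdsWithin_le_nhds
  have im_tendsto := ((continuous_im.comp (quadForm x).continuous).tendsto _).comp
    (h.hasFDerivAt_opLog.continuousAt.tendsto.comp shift_tendsto)
  exact ge_of_tendsto (im_tendsto.const_mul c) (eventually_mem_nhdsWithin.mono fun ε hε =>
    mul_im_quadForm_opLog_le_add hT hc hε x)

lemma isDissipative_opLog (hT : IsDissipative T) (hU : IsUnit T) : IsDissipative (opLog T) := by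
  intro x
  simpa [opLog_one, quadForm_apply] using mul_im_quadForm_opLog_le hT hU one_ne_zero x

lemma im_inner_opLog_le (hT : IsDissipative T) (hU : IsUnit T) (x : H) :
    (⟪x, opLog T x⟫_ℂ).im ≤ Real.pi * ‖x‖ ^ 2 := by
  have := mul_im_quadForm_opLog_le hT hU (neg_ne_zero.2 one_ne_zero) x
  rw [ofReal_neg, ofReal_one, neg_one_smul, opLog_neg_one, quadForm_smul_one, im_mul_ofReal] at this
  simpa [quadForm_apply] using this

end ImaginaryPart

theorem opLog_herglotz_general (M : ℂ → H →L[ℂ] H) (hM : IsHerglotz M)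
    (z₀ : ℂ) (hz₀ : 0 < z₀.im) (hM₀ : IsUnit (M z₀)) :
    IsHerglotz (fun z => opLog (M z)) ∧
    ∀ z : ℂ, 0 < z.im →
      (imPart (opLog (M z))).IsPositive ∧
      (((Real.pi : ℂ) • (1 : H →L[ℂ] H)) - imPart (opLog (M z))).IsPositive := by
  have hdiss (z : ℂ) (hz : 0 < z.im) : IsDissipative (M z) :=
    (isPositive_imPart_iff _).1 (hM.2 z hz)
  have hU (z : ℂ) (hz : 0 < z.im) : IsUnit (M z) :=
    isUnit_of_isPreconnected (isOpen_lt continuous_const continuous_im)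
      (convex_halfSpace_im_gt 0).isPreconnected hM.1 hdiss hz₀ hz hM₀
  have hnonneg (z : ℂ) (hz : 0 < z.im) : (imPart (opLog (M z))).IsPositive :=
    (isPositive_imPart_iff _).2 (isDissipative_opLog (hdiss z hz) (hU z hz))
  refine ⟨⟨fun z hz => ?_, hnonneg⟩, fun z hz => ⟨hnonneg z hz, ?_⟩⟩
  · obtain ⟨C, h⟩ := (hdiss z hz).exists_rayBound (hU z hz)
    exact h.hasFDerivAt_opLog.differentiableAt.comp_differentiableWithinAt z (hM.1 z hz)
  · exact (isPositive_smul_one_sub_imPart_iff _ _).2 (im_inner_opLog_le (hdiss z hz) (hU z hz))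

/-- Lemma 2.6: if `M` is a Herglotz operator which is boundedly invertible somewhere
(and hence everywhere) in `ℂ₊`, then `log M` is a Herglotz operator and
`0 ≤ Im (log M(z)) ≤ π I` on `ℂ₊`. -/
theorem opLog_herglotz [SeparableSpace H]
    (M : ℂ → H →L[ℂ] H) (hM : IsHerglotz M)
    (z₀ : ℂ) (hz₀ : 0 < z₀.im) (hM₀ : IsUnit (M z₀)) :
    IsHerglotz (fun z => opLog (M z)) ∧
    ∀ z : ℂ, 0 < z.im →
      (imPart (opLog (M z))).IsPositive ∧
      (((Real.pi : ℂ) • (1 : H →L[ℂ] H)) - imPart (opLog (M z))).IsPositive :=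
  opLog_herglotz_general M hM z₀ hz₀ hM₀

end SpectralShift
end
end

section
/- Let M : ℂ₊ → B(H) be a Herglotz operator with M(z₀)⁻¹ ∈ B(H) for some (and hence all) z₀ ∈ ℂ₊, and let {Ξ(λ)}_{λ∈ℝ} and C = C* ∈ B(H) realize the representation log(M(z)) = C + ∫_ℝ dλ Ξ(λ)((λ − z)⁻¹ − λ(1 + λ²)⁻¹), with 0 ≤ Ξ(λ) ≤ I_H a.e. If in addition Im(log(M(z₀))) is trace class for some (and hence all) z₀ ∈ ℂ₊, then: Ξ(λ) is a nonnegative trace class operator for a.e. λ ∈ ℝ; the function λ ↦ tr_H(Ξ(λ)) is nonnegative, locally integrable on ℝ, and satisfies ∫_ℝ dλ (1 + λ²)⁻¹ tr_H(Ξ(λ)) < ∞; and for all z ∈ ℂ₊, tr_H(Im(log(M(z)))) = Im(z) ∫_ℝ dλ tr_H(Ξ(λ)) |λ − z|⁻². -/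
open Complex Filter MeasureTheory TopologicalSpace ContinuousLinearMap
open scoped InnerProductSpace Topology

noncomputable section

namespace SpectralShift

variable {H : Type*} [NormedAddCommGroup H] [InnerProductSpace ℂ H] [CompleteSpace H]

/-!
Taking imaginary parts in `F z - C = ∫ ((l - z)⁻¹ - l (1 + l²)⁻¹) Ξ(l) dμ(l)` exhibits `Im (F z)`
as the weak integral of the positive operators `(Im z / |l - z|²) Ξ(l)`. For a positive operator
the sum of the diagonal in a basis is a basis-independent element of `[0, ∞]`, and by Tonelli over
a countable basis this extended trace commutes with weak integrals. Finiteness at one point `z₀`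
passes to every `z` of the upper half-plane because the Poisson kernels of any two points are
comparable. The choice `z = i` gives the weight `(1 + l²)⁻¹`.
-/

section PositiveOperators

omit [CompleteSpace H] in
theorem ofReal_norm_inner_of_isPositive {T : H →L[ℂ] H} (hT : T.IsPositive) (x : H) :
    (‖⟪x, T x⟫_ℂ‖ : ℂ) = ⟪x, T x⟫_ℂ :=
  Complex.norm_of_nonneg' (hT.inner_nonneg_right x)

omit [CompleteSpace H] in
theorem isPositive_of_inner_eq_ofReal {T : H →L[ℂ] H} (r : H → ℝ) (hr : ∀ x, 0 ≤ r x)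
    (hT : ∀ x, ⟪x, T x⟫_ℂ = r x) : T.IsPositive := by
  refine (ContinuousLinearMap.isPositive_iff_complex T).2 fun x => ?_
  have hx : ⟪T x, x⟫_ℂ = r x := by rw [← inner_conj_symm, hT, Complex.conj_ofReal]
  simpa [hx] using hr x

theorem imPart_smul_of_isSelfAdjoint {T : H →L[ℂ] H} (hT : IsSelfAdjoint T) (c : ℂ) :
    imPart (c • T) = (c.im : ℂ) • T := by
  rw [imPart, map_smulₛₗ, hT.adjoint_eq, ← sub_smul, smul_smul, Complex.sub_conj]
  congr 1
  push_cast
  field_simp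

theorem imPart_sub_of_isSelfAdjoint {C : H →L[ℂ] H} (hC : IsSelfAdjoint C) (T : H →L[ℂ] H) :
    imPart (T - C) = imPart T := by
  rw [imPart, imPart, map_sub, hC.adjoint_eq, sub_sub_sub_cancel_right]

end PositiveOperators

section ExtendedTrace

theorem countable_of_hilbertBasis {E ι : Type*} [NormedAddCommGroup E] [InnerProductSpace ℂ E]
    [SeparableSpace E] (b : HilbertBasis ι ℂ E) : Countable ι := by
  have dist_sq {i j : ι} (hij : i ≠ j) : dist (b i) (b j) ^ 2 = 2 := by
    rw [dist_eq_norm, @norm_sub_sq ℂ, b.orthonormal.2 hij, b.orthonormal.1 i, b.orthonormal.1 j]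
    norm_num
  have disjoint_balls : Pairwise (Function.onFun Disjoint fun i => Metric.ball (b i) (1 / 2)) :=
    fun i j hij => Metric.ball_disjoint_ball <| by
      nlinarith [dist_sq hij, dist_nonneg (x := b i) (y := b j)]
  exact disjoint_balls.countable_of_isOpen_disjoint (fun _ => Metric.isOpen_ball)
    fun i => ⟨b i, Metric.mem_ball_self (by norm_num)⟩

theorem tsum_enorm_inner_sq {E ι : Type*} [NormedAddCommGroup E] [InnerProductSpace ℂ E]
    (b : HilbertBasis ι ℂ E) (x : E) : ∑' i, ‖⟪b i, x⟫_ℂ‖ₑ ^ 2 = ‖x‖ₑ ^ 2 := by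
  have parseval : HasSum (fun i => ‖⟪b i, x⟫_ℂ‖ ^ 2) (‖x‖ ^ 2) := by
    have h := lp.hasSum_norm (p := 2) (by norm_num) (b.repr x)
    simpa [b.repr_apply_apply] using h
  simp_rw [← ofReal_norm, ← ENNReal.ofReal_pow (norm_nonneg _)]
  rw [← parseval.tsum_eq, ENNReal.ofReal_tsum_of_nonneg (fun _ => by positivity) parseval.summable]

theorem tsum_enorm_inner_eq_of_isPositive {ι κ : Type*} (b : HilbertBasis ι ℂ H)
    (c : HilbertBasis κ ℂ H) {T : H →L[ℂ] H} (hT : T.IsPositive) :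
    ∑' i, ‖⟪b i, T (b i)⟫_ℂ‖ₑ = ∑' j, ‖⟪c j, T (c j)⟫_ℂ‖ₑ := by
  obtain ⟨S, hS, rfl⟩ := CStarAlgebra.nonneg_iff_exists_isSelfAdjoint_and_eq_mul_self.1
    ((ContinuousLinearMap.nonneg_iff_isPositive T).2 hT)
  have symm (x y : H) : ⟪S x, y⟫_ℂ = ⟪x, S y⟫_ℂ := hS.isSymmetric x y
  have enorm_inner (x : H) : ‖⟪x, (S * S) x⟫_ℂ‖ₑ = ‖S x‖ₑ ^ 2 := by
    rw [mul_apply_eq_comp, ← symm, inner_self_eq_norm_sq_to_K, enorm_pow]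
    simp only [← ofReal_norm, RCLike.norm_ofReal, abs_norm]
  calc ∑' i, ‖⟪b i, (S * S) (b i)⟫_ℂ‖ₑ
      = ∑' i, ∑' j, ‖⟪c j, S (b i)⟫_ℂ‖ₑ ^ 2 := by simp only [enorm_inner, tsum_enorm_inner_sq]
    _ = ∑' j, ∑' i, ‖⟪c j, S (b i)⟫_ℂ‖ₑ ^ 2 := ENNReal.tsum_comm
    _ = ∑' j, ∑' i, ‖⟪b i, S (c j)⟫_ℂ‖ₑ ^ 2 := by
        refine tsum_congr fun j => tsum_congr fun i => ?_
        rw [← symm, ← inner_conj_symm, RCLike.enorm_conj]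
    _ = ∑' j, ‖⟪c j, (S * S) (c j)⟫_ℂ‖ₑ := by simp only [enorm_inner, tsum_enorm_inner_sq]

variable (H) in
/-- The Hilbert basis used in the definition of `trH`. -/
def traceBasis : HilbertBasis (exists_hilbertBasis ℂ H).choose ℂ H :=
  (exists_hilbertBasis ℂ H).choose_spec.choose

/-- The trace of a positive operator as an element of `[0, ∞]`, computed in `traceBasis`. For an
operator that is not positive it is the basis-dependent `ℓ¹` norm of the diagonal. -/
def etrace (T : H →L[ℂ] H) : ENNReal :=
  ∑' i, ‖⟪traceBasis H i, T (traceBasis H i)⟫_ℂ‖ₑ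

theorem etrace_smul (c : ℂ) (T : H →L[ℂ] H) : etrace (c • T) = ‖c‖ₑ * etrace T := by
  simp only [etrace, smul_apply, inner_smul_right, enorm_mul, ENNReal.tsum_mul_left]

theorem trH_smul (c : ℂ) (T : H →L[ℂ] H) : trH (c • T) = c * trH T := by
  simp only [trH, smul_apply, inner_smul_right, tsum_mul_left]

theorem isTraceClass_iff_etrace_ne_top {T : H →L[ℂ] H} (hT : T.IsPositive) :
    IsTraceClass T ↔ etrace T ≠ ⊤ := by
  refine ⟨fun h => ?_, fun h w b => ?_⟩
  · simpa only [etrace, ← ofReal_norm] using (h _ (traceBasis H)).tsum_ofReal_ne_top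
  · rw [etrace, tsum_enorm_inner_eq_of_isPositive _ b hT] at h
    simpa only [toReal_enorm] using ENNReal.summable_toReal h

theorem trH_eq_toReal_etrace {T : H →L[ℂ] H} (hT : T.IsPositive) :
    trH T = ((etrace T).toReal : ℂ) := by
  rw [etrace, ENNReal.tsum_toReal_eq fun _ => enorm_ne_top, Complex.ofReal_tsum]
  refine tsum_congr fun i => ?_
  rw [toReal_enorm, ofReal_norm_inner_of_isPositive hT]
  rfl

omit [CompleteSpace H] in
theorem isTraceClass_smul_iff {c : ℂ} (hc : c ≠ 0) {T : H →L[ℂ] H} :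
    IsTraceClass (c • T) ↔ IsTraceClass T := by
  simp only [IsTraceClass, smul_apply, inner_smul_right, norm_mul,
    summable_mul_left_iff (norm_ne_zero_iff.2 hc)]

end ExtendedTrace

/-- `A = ∫ Φ dμ` as a weak operator integral: every matrix element of `Φ` is integrable, and its
integral is the matrix element of `A`. -/
structure IsWeakIntegral {α : Type*} [MeasurableSpace α] (μ : Measure α) (Φ : α → H →L[ℂ] H)
    (A : H →L[ℂ] H) : Prop where
  integrable_inner : ∀ f g : H, Integrable (fun a => ⟪f, Φ a g⟫_ℂ) μ
  inner_eq_integral : ∀ f g : H, ⟪f, A g⟫_ℂ = ∫ a, ⟪f, Φ a g⟫_ℂ ∂μ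

omit [CompleteSpace H] in
theorem isWeakIntegral_smul_sub_of_eq_add {α : Type*} [MeasurableSpace α] {μ : Measure α}
    {k : α → ℂ} {Φ : α → H →L[ℂ] H} {A C : H →L[ℂ] H}
    (h : ∀ f g : H, Integrable (fun a => k a * ⟪f, Φ a g⟫_ℂ) μ ∧
      ⟪f, A g⟫_ℂ = ⟪f, C g⟫_ℂ + ∫ a, k a * ⟪f, Φ a g⟫_ℂ ∂μ) :
    IsWeakIntegral μ (fun a => k a • Φ a) (A - C) where
  integrable_inner f g := by
    simpa only [smul_apply, inner_smul_right] using (h f g).1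
  inner_eq_integral f g := by
    simpa only [sub_apply, smul_apply, inner_sub_right, inner_smul_right, sub_eq_iff_eq_add']
      using (h f g).2

namespace IsWeakIntegral

variable {α : Type*} [MeasurableSpace α] {μ : Measure α} {Φ Ψ : α → H →L[ℂ] H} {A B : H →L[ℂ] H}

omit [CompleteSpace H] in
theorem congr_ae (h : IsWeakIntegral μ Φ A) (hΦΨ : Φ =ᵐ[μ] Ψ) : IsWeakIntegral μ Ψ A where
  integrable_inner f g := (h.integrable_inner f g).congr (hΦΨ.mono fun a ha => by simp only [ha])
  inner_eq_integral f g := (h.inner_eq_integral f g).trans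
    (integral_congr_ae (hΦΨ.mono fun a ha => by simp only [ha]))

protected theorem imPart (h : IsWeakIntegral μ Φ A) :
    IsWeakIntegral μ (fun a => imPart (Φ a)) (imPart A) := by
  have inner_imPart (T : H →L[ℂ] H) (f g : H) : ⟪f, imPart T g⟫_ℂ =
      (2 * Complex.I)⁻¹ * (⟪f, T g⟫_ℂ - (starRingEnd ℂ) ⟪g, T f⟫_ℂ) := by
    rw [imPart, smul_apply, inner_smul_right, sub_apply, inner_sub_right,
      ContinuousLinearMap.adjoint_inner_right, inner_conj_symm]
  have integrable_conj (f g : H) : Integrable (fun a => (starRingEnd ℂ) ⟪g, Φ a f⟫_ℂ) μ :=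
    (RCLike.conjLIE (K := ℂ)).integrable_comp_iff.2 (h.integrable_inner g f)
  refine ⟨fun f g => ?_, fun f g => ?_⟩
  · simp only [inner_imPart]
    exact ((h.integrable_inner f g).sub (integrable_conj f g)).const_mul _
  · simp only [inner_imPart]
    rw [integral_const_mul, integral_sub (h.integrable_inner f g) (integrable_conj f g),
      integral_conj, h.inner_eq_integral, h.inner_eq_integral]

omit [CompleteSpace H] in
theorem inner_self_eq_integral_norm (h : IsWeakIntegral μ Φ A) (hΦ : ∀ᵐ a ∂μ, (Φ a).IsPositive)
    (f : H) : ⟪f, A f⟫_ℂ = ((∫ a, ‖⟪f, Φ a f⟫_ℂ‖ ∂μ : ℝ) : ℂ) := by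
  rw [h.inner_eq_integral, ← integral_complex_ofReal]
  exact integral_congr_ae (hΦ.mono fun a ha => (ofReal_norm_inner_of_isPositive ha f).symm)

omit [CompleteSpace H] in
theorem isPositive (h : IsWeakIntegral μ Φ A) (hΦ : ∀ᵐ a ∂μ, (Φ a).IsPositive) : A.IsPositive :=
  isPositive_of_inner_eq_ofReal (fun f => ∫ a, ‖⟪f, Φ a f⟫_ℂ‖ ∂μ)
    (fun _ => integral_nonneg fun _ => norm_nonneg _) (h.inner_self_eq_integral_norm hΦ)

variable [SeparableSpace H]

theorem aemeasurable_etrace (h : IsWeakIntegral μ Φ A) : AEMeasurable (fun a => etrace (Φ a)) μ :=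
  have := countable_of_hilbertBasis (traceBasis H)
  AEMeasurable.tsum fun _ => (h.integrable_inner _ _).aestronglyMeasurable.enorm

theorem etrace_eq_lintegral (h : IsWeakIntegral μ Φ A) (hΦ : ∀ᵐ a ∂μ, (Φ a).IsPositive) :
    etrace A = ∫⁻ a, etrace (Φ a) ∂μ := by
  have := countable_of_hilbertBasis (traceBasis H)
  have enorm_inner (f : H) : ‖⟪f, A f⟫_ℂ‖ₑ = ∫⁻ a, ‖⟪f, Φ a f⟫_ℂ‖ₑ ∂μ := by
    rw [h.inner_self_eq_integral_norm hΦ, ← ofReal_norm, Complex.norm_real,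
      Real.norm_of_nonneg (integral_nonneg fun _ => norm_nonneg _),
      ofReal_integral_norm_eq_lintegral_enorm (h.integrable_inner f f)]
  simp only [etrace, enorm_inner]
  exact (lintegral_tsum fun _ => (h.integrable_inner _ _).aestronglyMeasurable.enorm).symm

theorem isTraceClass_iff_lintegral_ne_top (h : IsWeakIntegral μ Φ A)
    (hΦ : ∀ᵐ a ∂μ, (Φ a).IsPositive) : IsTraceClass A ↔ ∫⁻ a, etrace (Φ a) ∂μ ≠ ⊤ := by
  rw [isTraceClass_iff_etrace_ne_top (h.isPositive hΦ), h.etrace_eq_lintegral hΦ]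

theorem isTraceClass_of_etrace_le (hA : IsWeakIntegral μ Φ A) (hB : IsWeakIntegral μ Ψ B)
    (hΦ : ∀ᵐ a ∂μ, (Φ a).IsPositive) (hΨ : ∀ᵐ a ∂μ, (Ψ a).IsPositive) (htr : IsTraceClass A)
    {K : ENNReal} (hK : K ≠ ⊤) (hle : ∀ᵐ a ∂μ, etrace (Ψ a) ≤ K * etrace (Φ a)) :
    IsTraceClass B := by
  rw [hA.isTraceClass_iff_lintegral_ne_top hΦ] at htr
  rw [hB.isTraceClass_iff_lintegral_ne_top hΨ]
  refine ne_top_of_le_ne_top (ENNReal.mul_ne_top hK htr) ?_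
  rw [← lintegral_const_mul' _ _ hK]
  exact lintegral_mono_ae hle

variable (h : IsWeakIntegral μ Φ A) (hΦ : ∀ᵐ a ∂μ, (Φ a).IsPositive) (htr : IsTraceClass A)
include h hΦ htr

theorem ae_etrace_lt_top : ∀ᵐ a ∂μ, etrace (Φ a) < ⊤ :=
  ae_lt_top' h.aemeasurable_etrace ((h.isTraceClass_iff_lintegral_ne_top hΦ).1 htr)

theorem ae_isTraceClass : ∀ᵐ a ∂μ, IsTraceClass (Φ a) := by
  filter_upwards [hΦ, h.ae_etrace_lt_top hΦ htr] with a hpos hfin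
  exact (isTraceClass_iff_etrace_ne_top hpos).2 hfin.ne

theorem integrable_trH : Integrable (fun a => trH (Φ a)) μ :=
  (integrable_toReal_of_lintegral_ne_top h.aemeasurable_etrace
    ((h.isTraceClass_iff_lintegral_ne_top hΦ).1 htr)).ofReal.congr
    (hΦ.mono fun _ ha => (trH_eq_toReal_etrace ha).symm)

theorem trH_eq_integral : trH A = ∫ a, trH (Φ a) ∂μ := by
  rw [integral_congr_ae (hΦ.mono fun _ ha => trH_eq_toReal_etrace ha), integral_complex_ofReal,
    integral_toReal h.aemeasurable_etrace (h.ae_etrace_lt_top hΦ htr),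
    trH_eq_toReal_etrace (h.isPositive hΦ), h.etrace_eq_lintegral hΦ]

end IsWeakIntegral

section Kernels

/-- The kernel of the Herglotz (Nevanlinna) representation of functions on the upper half-plane. -/
def herglotzKernel (z : ℂ) (l : ℝ) : ℂ := ((l : ℂ) - z)⁻¹ - (l : ℂ) * ((1 : ℂ) + (l : ℂ) ^ 2)⁻¹

/-- The Poisson kernel `Im z / |l - z|²` of the upper half-plane, without the factor `π⁻¹`. -/
def poissonKernel (z : ℂ) (l : ℝ) : ℝ := z.im * (normSq ((l : ℂ) - z))⁻¹

theorem im_herglotzKernel (z : ℂ) (l : ℝ) : (herglotzKernel z l).im = poissonKernel z l := by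
  have real_term : (l : ℂ) * ((1 : ℂ) + (l : ℂ) ^ 2)⁻¹ = ((l * (1 + l ^ 2)⁻¹ : ℝ) : ℂ) := by
    push_cast
    rfl
  rw [herglotzKernel, real_term, Complex.sub_im, Complex.ofReal_im, Complex.inv_im, poissonKernel]
  simp [div_eq_mul_inv]

theorem poissonKernel_I (l : ℝ) : poissonKernel Complex.I l = (1 + l ^ 2)⁻¹ := by
  simp [poissonKernel, Complex.normSq_apply, sq, add_comm]

theorem im_le_norm_ofReal_sub (z : ℂ) (l : ℝ) : z.im ≤ ‖(l : ℂ) - z‖ := by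
  simpa using (neg_le_abs _).trans (Complex.abs_im_le_norm ((l : ℂ) - z))

theorem normSq_ofReal_sub_pos {z : ℂ} (hz : 0 < z.im) (l : ℝ) : 0 < normSq ((l : ℂ) - z) := by
  rw [Complex.normSq_pos, ← norm_pos_iff]
  exact hz.trans_le (im_le_norm_ofReal_sub z l)

theorem poissonKernel_pos {z : ℂ} (hz : 0 < z.im) (l : ℝ) : 0 < poissonKernel z l :=
  mul_pos hz (inv_pos.2 (normSq_ofReal_sub_pos hz l))

theorem normSq_ofReal_sub_le {z : ℂ} (hz : 0 < z.im) (w : ℂ) (l : ℝ) :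
    normSq ((l : ℂ) - w) ≤ (1 + ‖z - w‖ / z.im) ^ 2 * normSq ((l : ℂ) - z) := by
  have norm_le : ‖(l : ℂ) - w‖ ≤ (1 + ‖z - w‖ / z.im) * ‖(l : ℂ) - z‖ := calc
    ‖(l : ℂ) - w‖ ≤ ‖(l : ℂ) - z‖ + ‖z - w‖ := norm_sub_le_norm_sub_add_norm_sub _ _ _
    _ = ‖(l : ℂ) - z‖ + ‖z - w‖ / z.im * z.im := by rw [div_mul_cancel₀ _ hz.ne']
    _ ≤ ‖(l : ℂ) - z‖ + ‖z - w‖ / z.im * ‖(l : ℂ) - z‖ := by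
      gcongr
      exact im_le_norm_ofReal_sub z l
    _ = (1 + ‖z - w‖ / z.im) * ‖(l : ℂ) - z‖ := by ring
  rw [Complex.normSq_eq_norm_sq, Complex.normSq_eq_norm_sq, ← mul_pow]
  exact pow_le_pow_left₀ (norm_nonneg _) norm_le 2

theorem exists_poissonKernel_le {z w : ℂ} (hz : 0 < z.im) (hw : 0 < w.im) :
    ∃ K : ℝ, ∀ l, poissonKernel z l ≤ K * poissonKernel w l := by
  refine ⟨z.im / w.im * (1 + ‖z - w‖ / z.im) ^ 2, fun l => ?_⟩
  have inv_le : (normSq ((l : ℂ) - z))⁻¹ ≤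
      (1 + ‖z - w‖ / z.im) ^ 2 * (normSq ((l : ℂ) - w))⁻¹ := by
    rw [← div_eq_mul_inv, le_div_iff₀ (normSq_ofReal_sub_pos hw l),
      inv_mul_le_iff₀ (normSq_ofReal_sub_pos hz l), mul_comm]
    exact normSq_ofReal_sub_le hz w l
  calc poissonKernel z l
      ≤ z.im * ((1 + ‖z - w‖ / z.im) ^ 2 * (normSq ((l : ℂ) - w))⁻¹) := by
        unfold poissonKernel
        gcongr
    _ = z.im / w.im * (1 + ‖z - w‖ / z.im) ^ 2 * poissonKernel w l := by
        unfold poissonKernel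
        field_simp

end Kernels

section PoissonIntegral

variable {μ : Measure ℝ} {Ξ : ℝ → H →L[ℂ] H}

theorem IsWeakIntegral.imPart_herglotz {A C : H →L[ℂ] H} (hC : IsSelfAdjoint C)
    (hΞ : ∀ᵐ l ∂μ, IsSelfAdjoint (Ξ l)) {z : ℂ}
    (h : IsWeakIntegral μ (fun l => herglotzKernel z l • Ξ l) (A - C)) :
    IsWeakIntegral μ (fun l => (poissonKernel z l : ℂ) • Ξ l) (imPart A) := by
  rw [← imPart_sub_of_isSelfAdjoint hC]
  refine h.imPart.congr_ae (hΞ.mono fun l hl => ?_)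
  simp only [imPart_smul_of_isSelfAdjoint hl, im_herglotzKernel]

omit [CompleteSpace H] in
theorem ae_isPositive_poissonKernel_smul (hΞ : ∀ᵐ l ∂μ, (Ξ l).IsPositive) {z : ℂ}
    (hz : 0 < z.im) : ∀ᵐ l ∂μ, ((poissonKernel z l : ℂ) • Ξ l).IsPositive :=
  hΞ.mono fun l hl => hl.smul_of_nonneg (Complex.zero_le_real.2 (poissonKernel_pos hz l).le)

theorem exists_etrace_poissonKernel_smul_le {z w : ℂ} (hz : 0 < z.im) (hw : 0 < w.im) :
    ∃ K : ENNReal, K ≠ ⊤ ∧ ∀ (l : ℝ) (T : H →L[ℂ] H),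
      etrace ((poissonKernel z l : ℂ) • T) ≤ K * etrace ((poissonKernel w l : ℂ) • T) := by
  obtain ⟨K, hK⟩ := exists_poissonKernel_le hz hw
  refine ⟨ENNReal.ofReal K, ENNReal.ofReal_ne_top, fun l T => ?_⟩
  have enorm_kernel {v : ℂ} (hv : 0 < v.im) :
      ‖(poissonKernel v l : ℂ)‖ₑ = ENNReal.ofReal (poissonKernel v l) := by
    rw [← ofReal_norm, Complex.norm_real, Real.norm_of_nonneg (poissonKernel_pos hv l).le]
  rw [etrace_smul, etrace_smul, enorm_kernel hz, enorm_kernel hw, ← mul_assoc,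
    ← ENNReal.ofReal_mul' (poissonKernel_pos hw l).le]
  gcongr
  exact hK l

theorem trH_poissonKernel_smul (z : ℂ) (l : ℝ) (T : H →L[ℂ] H) :
    trH ((poissonKernel z l : ℂ) • T) = z.im * (trH T * (normSq ((l : ℂ) - z) : ℂ)⁻¹) := by
  rw [trH_smul, poissonKernel]
  push_cast
  ring

theorem integrable_inv_one_add_sq_mul_re_trH
    (h : Integrable (fun l => trH ((poissonKernel Complex.I l : ℂ) • Ξ l)) μ) :
    Integrable (fun l : ℝ => ((1 : ℝ) + l ^ 2)⁻¹ * (trH (Ξ l)).re) μ := by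
  simpa only [trH_smul, poissonKernel_I, RCLike.re_to_complex, Complex.re_ofReal_mul] using h.re

theorem locallyIntegrable_of_integrable_inv_one_add_sq_mul {g : ℝ → ℝ}
    (h : Integrable (fun l : ℝ => ((1 : ℝ) + l ^ 2)⁻¹ * g l) μ) : LocallyIntegrable g μ := by
  have local_int := h.locallyIntegrable.continuous_mul (g := fun l => 1 + l ^ 2) (by fun_prop)
  refine local_int.congr (ae_of_all _ fun l => ?_)
  exact mul_inv_cancel_left₀ (by positivity) _

end PoissonIntegral

theorem opLog_herglotz_representation_traceClass_general [SeparableSpace H] {μ : Measure ℝ}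
    {F : ℂ → H →L[ℂ] H} {Ξ : ℝ → H →L[ℂ] H} {C : H →L[ℂ] H} (hC : IsSelfAdjoint C)
    (hΞ : ∀ᵐ l ∂μ, (Ξ l).IsPositive)
    (hrep : ∀ z : ℂ, 0 < z.im → IsWeakIntegral μ (fun l => herglotzKernel z l • Ξ l) (F z - C))
    {z₀ : ℂ} (hz₀ : 0 < z₀.im) (htr : IsTraceClass (imPart (F z₀))) :
    (∀ᵐ l ∂μ, IsTraceClass (Ξ l) ∧ 0 ≤ (trH (Ξ l)).re ∧ (trH (Ξ l)).im = 0) ∧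
    LocallyIntegrable (fun l : ℝ => (trH (Ξ l)).re) μ ∧
    Integrable (fun l : ℝ => ((1 : ℝ) + l ^ 2)⁻¹ * (trH (Ξ l)).re) μ ∧
    ∀ z : ℂ, 0 < z.im →
      IsTraceClass (imPart (F z)) ∧
      Integrable (fun l : ℝ => trH (Ξ l) * ((Complex.normSq ((l : ℂ) - z) : ℂ))⁻¹) μ ∧
      trH (imPart (F z)) =
        (z.im : ℂ) * ∫ l : ℝ, trH (Ξ l) * ((Complex.normSq ((l : ℂ) - z) : ℂ))⁻¹ ∂μ := by
  have poisson (z : ℂ) (hz : 0 < z.im) :=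
    (hrep z hz).imPart_herglotz hC (hΞ.mono fun _ hl => hl.isSelfAdjoint)
  have pos {z : ℂ} (hz : 0 < z.im) := ae_isPositive_poissonKernel_smul hΞ hz
  have traceClass (z : ℂ) (hz : 0 < z.im) : IsTraceClass (imPart (F z)) := by
    obtain ⟨K, hK, hle⟩ := exists_etrace_poissonKernel_smul_le (H := H) hz hz₀
    exact (poisson z₀ hz₀).isTraceClass_of_etrace_le (poisson z hz) (pos hz₀) (pos hz) htr hK
      (ae_of_all μ fun l => hle l (Ξ l))
  have integrable (z : ℂ) (hz : 0 < z.im) :=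
    (poisson z hz).integrable_trH (pos hz) (traceClass z hz)
  have weighted := integrable_inv_one_add_sq_mul_re_trH (integrable Complex.I (by simp))
  refine ⟨?_, locallyIntegrable_of_integrable_inv_one_add_sq_mul weighted, weighted, fun z hz => ?_⟩
  · filter_upwards [hΞ, (poisson z₀ hz₀).ae_isTraceClass (pos hz₀) htr] with l hpos hl
    have kernel_ne_zero := Complex.ofReal_ne_zero.2 (poissonKernel_pos hz₀ l).ne'
    simp [(isTraceClass_smul_iff kernel_ne_zero).1 hl, trH_eq_toReal_etrace hpos]
  · have hint := integrable z hz
    have trace_eq := (poisson z hz).trH_eq_integral (pos hz) (traceClass z hz)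
    simp only [trH_poissonKernel_smul] at hint trace_eq
    rw [integral_const_mul] at trace_eq
    exact ⟨traceClass z hz, (integrable_const_mul_iff (by simpa using hz.ne') _).1 hint, trace_eq⟩

/-- Theorem 2.8 (second part): if moreover `Im (log M(z₀))` is trace class for some
`z₀ ∈ ℂ₊`, then `Ξ(λ)` is trace class a.e. with nonnegative locally integrable trace,
`∫ (1+λ²)⁻¹ tr Ξ(λ) dλ < ∞`, and
`tr (Im (log M(z))) = Im z ∫ tr Ξ(λ) |λ-z|⁻² dλ` on `ℂ₊`. -/
theorem opLog_herglotz_representation_traceClass [SeparableSpace H]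
    (M : ℂ → H →L[ℂ] H) (hM : IsHerglotz M)
    (z₀ : ℂ) (hz₀ : 0 < z₀.im) (hM₀ : IsUnit (M z₀))
    (Ξ : ℝ → H →L[ℂ] H) (C : H →L[ℂ] H)
    (hC : IsSelfAdjoint C)
    (hΞsa : ∀ l : ℝ, IsSelfAdjoint (Ξ l))
    (hmeas : ∀ f g : H, Measurable fun l : ℝ => ⟪f, Ξ l g⟫_ℂ)
    (hbd : ∀ᵐ l ∂(volume : Measure ℝ),
      (Ξ l).IsPositive ∧ ((1 : H →L[ℂ] H) - Ξ l).IsPositive)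
    (hrep : ∀ z : ℂ, 0 < z.im → ∀ f g : H,
      Integrable (fun l : ℝ =>
        (((l : ℂ) - z)⁻¹ - (l : ℂ) * ((1 : ℂ) + (l : ℂ) ^ 2)⁻¹) * ⟪f, Ξ l g⟫_ℂ) ∧
      ⟪f, opLog (M z) g⟫_ℂ = ⟪f, C g⟫_ℂ +
        ∫ l : ℝ, (((l : ℂ) - z)⁻¹ - (l : ℂ) * ((1 : ℂ) + (l : ℂ) ^ 2)⁻¹) * ⟪f, Ξ l g⟫_ℂ)
    (htr : IsTraceClass (imPart (opLog (M z₀)))) :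
    (∀ᵐ l ∂(volume : Measure ℝ),
      IsTraceClass (Ξ l) ∧ 0 ≤ (trH (Ξ l)).re ∧ (trH (Ξ l)).im = 0) ∧
    LocallyIntegrable (fun l : ℝ => (trH (Ξ l)).re) ∧
    Integrable (fun l : ℝ => ((1 : ℝ) + l ^ 2)⁻¹ * (trH (Ξ l)).re) ∧
    ∀ z : ℂ, 0 < z.im →
      IsTraceClass (imPart (opLog (M z))) ∧
      Integrable (fun l : ℝ => trH (Ξ l) * ((Complex.normSq ((l : ℂ) - z) : ℂ))⁻¹) ∧
      trH (imPart (opLog (M z))) =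
        (z.im : ℂ) * ∫ l : ℝ, trH (Ξ l) * ((Complex.normSq ((l : ℂ) - z) : ℂ))⁻¹ := by
  exact opLog_herglotz_representation_traceClass_general hC (hbd.mono fun _ h => h.1)
    (fun z hz => isWeakIntegral_smul_sub_of_eq_add (hrep z hz)) hz₀ htr

end SpectralShift
end
end
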